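/- Let N ≥ 1, ρ > 0, γ > 0, and let α_1, …, α_N, ξ_1, …, ξ_N, x_1, …, x_N be real numbers satisfying x_i = ((1 + ρ(1+γ))/N) Σ_{j=1}^N x_j − (ρ/N) Σ_{j=1}^N α_j + ξ_i for every i ∈ {1, …, N}. Then for every i, |x_i − x*| ≤ (1 + 1/(ρ(1+γ))) · (1/N) Σ_{j=1}^N |ξ_j| + |ξ_i|, where x* = (1/(N(1+γ))) Σ_{j=1}^N α_j. In particular, if |ξ_j| ≤ δ for all j, then |x_i − x*| ≤ (2 + 1/(ρ(1+γ))) δ. -/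

import Mathlib

/-!
Write `c = ρ (1 + γ)` and let `S`, `A`, `Ξ` be the sums of `x`, `α`, `ξ`. Summing the fixed-point
relations over all indices gives `c S = ρ A - Ξ`, so the mean `S / N` differs from `xstar` by
`-Ξ / (c N)`. Substituting back into the `i`-th relation yields the exact error formula
`x i - xstar = ξ i - (1 + 1 / c) (Ξ / N)`, and both bounds follow from the triangle inequality.
-/

theorem stmt_11 (N : ℕ) (hN : 1 ≤ N) (ρ γ : ℝ) (hρ : 0 < ρ) (hγ : 0 < γ)
    (α ξ x : Fin N → ℝ)
    (hfix : ∀ i : Fin N,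
      x i = ((1 + ρ * (1 + γ)) / (N : ℝ)) * ∑ j : Fin N, x j
            - (ρ / (N : ℝ)) * ∑ j : Fin N, α j + ξ i)
    (xstar : ℝ)
    (hxstar : xstar = (1 / ((N : ℝ) * (1 + γ))) * ∑ j : Fin N, α j) :
    (∀ i : Fin N,
      |x i - xstar| ≤ (1 + 1 / (ρ * (1 + γ))) * ((1 / (N : ℝ)) * ∑ j : Fin N, |ξ j|)
                      + |ξ i|) ∧
    (∀ δ : ℝ, (∀ j : Fin N, |ξ j| ≤ δ) →
      ∀ i : Fin N, |x i - xstar| ≤ (2 + 1 / (ρ * (1 + γ))) * δ) := by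
  have hN0 : (0 : ℝ) < N := by exact_mod_cast hN
  have hγ1 : 0 < 1 + γ := by linarith
  have hc : 0 < ρ * (1 + γ) := mul_pos hρ hγ1
  have hsum : ρ * (1 + γ) * ∑ j, x j = ρ * ∑ j, α j - ∑ j, ξ j := by
    have h : ∑ i, x i = ∑ i, (((1 + ρ * (1 + γ)) / (N : ℝ)) * ∑ j : Fin N, x j
            - (ρ / (N : ℝ)) * ∑ j : Fin N, α j + ξ i) :=
      Finset.sum_congr rfl fun i _ => hfix i
    rw [Finset.sum_add_distrib, Finset.sum_const, Finset.card_univ, Fintype.card_fin,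
      nsmul_eq_mul] at h
    field_simp at h
    linarith
  have herr : ∀ i, x i - xstar
      = ξ i - (1 + 1 / (ρ * (1 + γ))) * ((1 / (N : ℝ)) * ∑ j, ξ j) := by
    intro i
    have hΞ : ∑ j, ξ j = ρ * ∑ j, α j - ρ * (1 + γ) * ∑ j, x j := by linarith
    rw [hfix i, hxstar, hΞ]
    field_simp
    ring
  have hk : 0 ≤ 1 + 1 / (ρ * (1 + γ)) := by positivity
  have hbound : ∀ i : Fin N,
      |x i - xstar| ≤ (1 + 1 / (ρ * (1 + γ))) * ((1 / (N : ℝ)) * ∑ j : Fin N, |ξ j|)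
                      + |ξ i| := by
    intro i
    rw [herr i]
    refine (abs_sub _ _).trans ?_
    rw [add_comm, abs_mul, abs_mul, abs_of_nonneg hk,
      abs_of_nonneg (by positivity : (0 : ℝ) ≤ 1 / N)]
    gcongr
    exact Finset.abs_sum_le_sum_abs _ _
  refine ⟨hbound, fun δ hδ i => (hbound i).trans ?_⟩
  have hmean : (1 / (N : ℝ)) * ∑ j, |ξ j| ≤ δ := by
    have h : ∑ j, |ξ j| ≤ N * δ := by
      simpa using Finset.sum_le_card_nsmul Finset.univ (fun j => |ξ j|) δ fun j _ => hδ j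
    rw [one_div, inv_mul_le_iff₀ hN0]
    exact h
  linarith [mul_le_mul_of_nonneg_left hmean hk, hδ i]
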